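/- arXiv:2008.12179 — 5 statements merged into one kernel-verified Lean document; each statement's English description precedes it below -/
import Mathlib

section
/- Let n, m ≥ 1, let f ∈ ℝⁿ, let g be a real n×m matrix, let G be a symmetric positive-definite real m×m matrix, let k ∈ ℝᵐ, let p, w ∈ ℝⁿ with gᵀw ≠ 0, and let a ∈ ℝ. Set z = ⟨w, f + g k⟩ + a and ū = k − (z/(wᵀ g G⁻¹ gᵀ w)) G⁻¹ gᵀ w. Then: (i) ⟨w, f + g ū⟩ = −a (the barrier constraint is rendered active); (ii) ⟨p, f + g ū⟩ = ⟨p, f + g k⟩ − (z/(wᵀ g G⁻¹ gᵀ w)) · (pᵀ g G⁻¹ gᵀ w); and (iii) if in addition ⟨p, f + g k⟩ ≤ 0, z < 0, and pᵀ g G⁻¹ gᵀ w < 0, then ⟨p, f + g ū⟩ < 0. -/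
open Matrix

section AffineControl

variable {ι κ R : Type*} [Fintype ι] [Fintype κ]

theorem dotProduct_add_mulVec_sub_smul [CommRing R] (q f : ι → R) (g : Matrix ι κ R)
    (k v : κ → R) (c : R) :
    q ⬝ᵥ (f + g *ᵥ (k - c • v)) = q ⬝ᵥ (f + g *ᵥ k) - c * (q ⬝ᵥ g *ᵥ v) := by
  rw [mulVec_sub, mulVec_smul, ← add_sub_assoc, dotProduct_sub, dotProduct_smul, smul_eq_mul]

theorem dotProduct_add_mulVec_sub_div_smul_eq_neg [Field R] (w f : ι → R) (g : Matrix ι κ R)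
    (k v : κ → R) (a : R) (hv : w ⬝ᵥ g *ᵥ v ≠ 0) :
    w ⬝ᵥ (f + g *ᵥ (k - ((w ⬝ᵥ (f + g *ᵥ k) + a) / (w ⬝ᵥ g *ᵥ v)) • v)) = -a := by
  rw [dotProduct_add_mulVec_sub_smul, div_mul_cancel₀ _ hv, sub_add_cancel_left]

theorem dotProduct_add_mulVec_sub_smul_neg [CommRing R] [PartialOrder R] [IsStrictOrderedRing R]
    {p f : ι → R} {g : Matrix ι κ R} {k v : κ → R} {c : R}
    (hk : p ⬝ᵥ (f + g *ᵥ k) ≤ 0) (hc : c < 0) (hv : p ⬝ᵥ g *ᵥ v < 0) :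
    p ⬝ᵥ (f + g *ᵥ (k - c • v)) < 0 := by
  rw [dotProduct_add_mulVec_sub_smul]
  exact sub_neg.mpr (hk.trans_lt (mul_pos_of_neg_of_neg hc hv))

end AffineControl

section PositiveForm

variable {κ R : Type*} [Fintype κ] [DecidableEq κ] [Preorder R]

theorem det_ne_zero_of_dotProduct_mulVec_pos [CommRing R] [IsDomain R] {G : Matrix κ κ R}
    (hG : ∀ u : κ → R, u ≠ 0 → 0 < u ⬝ᵥ G *ᵥ u) : G.det ≠ 0 := by
  intro hdet
  obtain ⟨u, hu, hGu⟩ := exists_mulVec_eq_zero_iff.mpr hdet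
  exact (hG u hu).ne' (by rw [hGu, dotProduct_zero])

-- With `u = G⁻¹ *ᵥ v`, the value of the inverse form at `v` is that of the form of `G` at `u`.
theorem dotProduct_inv_mulVec_pos [Field R] {G : Matrix κ κ R}
    (hG : ∀ u : κ → R, u ≠ 0 → 0 < u ⬝ᵥ G *ᵥ u) {v : κ → R} (hv : v ≠ 0) :
    0 < v ⬝ᵥ G⁻¹ *ᵥ v := by
  have mulVec_inv_mulVec : G *ᵥ (G⁻¹ *ᵥ v) = v := by
    rw [mulVec_mulVec, mul_nonsing_inv G (det_ne_zero_of_dotProduct_mulVec_pos hG).isUnit,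
      one_mulVec]
  have inv_mulVec_ne_zero : G⁻¹ *ᵥ v ≠ 0 := by
    intro h
    exact hv (by rw [← mulVec_inv_mulVec, h, mulVec_zero])
  have quadratic_pos := hG _ inv_mulVec_ne_zero
  rwa [mulVec_inv_mulVec, dotProduct_comm] at quadratic_pos

end PositiveForm

theorem stmt_5_general {ι κ K : Type*} [Fintype ι] [Fintype κ] [DecidableEq κ]
    [Field K] [LinearOrder K] [IsStrictOrderedRing K]
    (f : ι → K) (g : Matrix ι κ K) (G : Matrix κ κ K)
    (hGpos : ∀ u : κ → K, u ≠ 0 → 0 < u ⬝ᵥ G *ᵥ u)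
    (k : κ → K) (p w : ι → K) (hgw : gᵀ *ᵥ w ≠ 0) (a : K) :
    let z := w ⬝ᵥ (f + g *ᵥ k) + a
    let d := (gᵀ *ᵥ w) ⬝ᵥ G⁻¹ *ᵥ (gᵀ *ᵥ w)
    let ubar := k - (z / d) • (G⁻¹ *ᵥ (gᵀ *ᵥ w))
    (w ⬝ᵥ (f + g *ᵥ ubar) = -a) ∧
    (p ⬝ᵥ (f + g *ᵥ ubar) =
      p ⬝ᵥ (f + g *ᵥ k) - (z / d) * (p ⬝ᵥ (g *ᵥ (G⁻¹ *ᵥ (gᵀ *ᵥ w))))) ∧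
    (p ⬝ᵥ (f + g *ᵥ k) ≤ 0 → z < 0 → p ⬝ᵥ (g *ᵥ (G⁻¹ *ᵥ (gᵀ *ᵥ w))) < 0 →
      p ⬝ᵥ (f + g *ᵥ ubar) < 0) := by
  intro z d ubar
  have d_pos : 0 < d := dotProduct_inv_mulVec_pos hGpos hgw
  have d_eq : d = w ⬝ᵥ g *ᵥ (G⁻¹ *ᵥ (gᵀ *ᵥ w)) := by
    rw [← dotProduct_transpose_mulVec, dotProduct_comm]
  refine ⟨?barrier_active, dotProduct_add_mulVec_sub_smul .., ?lyapunov_decrease⟩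
  case barrier_active =>
    simp only [ubar, z, d_eq]
    exact dotProduct_add_mulVec_sub_div_smul_eq_neg w f g k _ a (d_eq ▸ d_pos.ne')
  case lyapunov_decrease =>
    intro nominal_nonpos z_neg cross_neg
    exact dotProduct_add_mulVec_sub_smul_neg nominal_nonpos
      (div_neg_of_neg_of_pos z_neg d_pos) cross_neg

/-- the active branch `ū` of the safe controller renders the
barrier constraint active and yields the Lyapunov-derivative identity (9). -/
theorem stmt_5 (n m : ℕ) (hn : 1 ≤ n) (hm : 1 ≤ m)
    (f : Fin n → ℝ) (g : Matrix (Fin n) (Fin m) ℝ)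
    (G : Matrix (Fin m) (Fin m) ℝ)
    (hGsymm : Gᵀ = G)
    (hGpos : ∀ u : Fin m → ℝ, u ≠ 0 → 0 < u ⬝ᵥ G *ᵥ u)
    (k : Fin m → ℝ) (p w : Fin n → ℝ) (hgw : gᵀ *ᵥ w ≠ 0) (a : ℝ) :
    let z := w ⬝ᵥ (f + g *ᵥ k) + a
    let d := (gᵀ *ᵥ w) ⬝ᵥ G⁻¹ *ᵥ (gᵀ *ᵥ w)
    let ubar := k - (z / d) • (G⁻¹ *ᵥ (gᵀ *ᵥ w))
    (w ⬝ᵥ (f + g *ᵥ ubar) = -a) ∧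
    (p ⬝ᵥ (f + g *ᵥ ubar) =
      p ⬝ᵥ (f + g *ᵥ k) - (z / d) * (p ⬝ᵥ (g *ᵥ (G⁻¹ *ᵥ (gᵀ *ᵥ w))))) ∧
    (p ⬝ᵥ (f + g *ᵥ k) ≤ 0 → z < 0 → p ⬝ᵥ (g *ᵥ (G⁻¹ *ᵥ (gᵀ *ᵥ w))) < 0 →
      p ⬝ᵥ (f + g *ᵥ ubar) < 0) :=
  stmt_5_general f g G hGpos k p w hgw a
end

section
/- Let α : ℝ → ℝ be an extended class-𝒦 function that is locally Lipschitz, let T ∈ (0, ∞], and let w : ℝ → ℝ be continuous on [0, T) and differentiable on (0, T) with derivative satisfying w′(t) ≥ −α(w(t)) for all t ∈ (0, T). If w(0) ≥ 0, then w(t) ≥ 0 for all t ∈ [0, T). -/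
/-!
Let `s` be the last time in `[0, t]` at which `w` is nonnegative. On `(s, t)` the function `w` is
negative, so `w' ≥ -α(w) ≥ 0` there and `w` is monotone on `[s, t]`; hence `w t ≥ w s ≥ 0`.
-/

open Set

theorem exists_mem_Icc_le_and_forall_mem_Ioc_lt {X Y : Type*}
    [LinearOrder X] [TopologicalSpace X] [OrderClosedTopology X] [CompactIccSpace X]
    [LinearOrder Y] [TopologicalSpace Y] [ClosedIciTopology Y]
    {f : X → Y} {a b : X} {c : Y} (hab : a ≤ b) (hf : ContinuousOn f (Icc a b)) (ha : c ≤ f a) :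
    ∃ s ∈ Icc a b, c ≤ f s ∧ ∀ x ∈ Ioc s b, f x < c := by
  have superlevel_compact : IsCompact (Icc a b ∩ f ⁻¹' Ici c) :=
    isCompact_Icc.of_isClosed_subset
      (hf.preimage_isClosed_of_isClosed isClosed_Icc isClosed_Ici) inter_subset_left
  obtain ⟨s, ⟨hs, hcs⟩, s_greatest⟩ :=
    superlevel_compact.exists_isGreatest ⟨a, left_mem_Icc.mpr hab, ha⟩
  refine ⟨s, hs, hcs, fun x hx ↦ not_le.mp fun hcx ↦ ?_⟩
  exact hx.1.not_ge (s_greatest ⟨⟨hs.1.trans hx.1.le, hx.2⟩, hcx⟩)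

theorem le_of_deriv_nonneg_of_lt {f : ℝ → ℝ} {a b c : ℝ} (hab : a ≤ b)
    (hf : ContinuousOn f (Icc a b)) (hf' : ∀ x ∈ Ioo a b, f x < c → DifferentiableAt ℝ f x)
    (hf'_nonneg : ∀ x ∈ Ioo a b, f x < c → 0 ≤ deriv f x) (ha : c ≤ f a) :
    c ≤ f b := by
  obtain ⟨s, hs, hcs, lt_after⟩ := exists_mem_Icc_le_and_forall_mem_Ioc_lt hab hf ha
  have mem_Ioo {x : ℝ} (hx : x ∈ Ioo s b) : x ∈ Ioo a b := Ioo_subset_Ioo_left hs.1 hx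
  have lt_of_mem {x : ℝ} (hx : x ∈ Ioo s b) : f x < c := lt_after x (Ioo_subset_Ioc_self hx)
  have f_mono : MonotoneOn f (Icc s b) := by
    refine monotoneOn_of_deriv_nonneg (convex_Icc s b) (hf.mono (Icc_subset_Icc_left hs.1)) ?_ ?_
    · rw [interior_Icc]
      exact fun x hx ↦ (hf' x (mem_Ioo hx) (lt_of_mem hx)).differentiableWithinAt
    · rw [interior_Icc]
      exact fun x hx ↦ hf'_nonneg x (mem_Ioo hx) (lt_of_mem hx)
  exact hcs.trans (f_mono (left_mem_Icc.mpr hs.2) (right_mem_Icc.mpr hs.2) hs.2)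

theorem stmt_7_general (α : ℝ → ℝ) (hα : ∀ y < 0, α y ≤ 0) (T : EReal) (w : ℝ → ℝ)
    (hw : ContinuousOn w {t : ℝ | 0 ≤ t ∧ (t : EReal) < T})
    (hderiv : ∀ t : ℝ, 0 < t → (t : EReal) < T →
      ∃ d : ℝ, HasDerivAt w d t ∧ -α (w t) ≤ d)
    (h0 : 0 ≤ w 0) :
    ∀ t : ℝ, 0 ≤ t → (t : EReal) < T → 0 ≤ w t := by
  intro t ht htT
  have lt_T {x : ℝ} (hx : x ≤ t) : (x : EReal) < T := (EReal.coe_le_coe hx).trans_lt htT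
  refine le_of_deriv_nonneg_of_lt ht (hw.mono fun x hx ↦ ⟨hx.1, lt_T hx.2⟩) ?_ ?_ h0
  · intro x hx _
    obtain ⟨d, hd, -⟩ := hderiv x hx.1 (lt_T hx.2.le)
    exact hd.differentiableAt
  · intro x hx hwx
    obtain ⟨d, hd, hαd⟩ := hderiv x hx.1 (lt_T hx.2.le)
    calc 0 ≤ -α (w x) := neg_nonneg.mpr (hα (w x) hwx)
      _ ≤ d := hαd
      _ = deriv w x := hd.deriv.symm

/-- scalar comparison (Brezis) lemma: if `w' ≥ -α(w)` on `(0,T)`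
with `α` a locally Lipschitz extended class-𝒦 function and `w(0) ≥ 0`, then
`w ≥ 0` on `[0,T)`. -/
theorem stmt_7 (α : ℝ → ℝ)
    (hαc : Continuous α) (hαm : StrictMono α) (hα0 : α 0 = 0)
    (hαl : LocallyLipschitz α)
    (T : EReal) (hT : 0 < T)
    (w : ℝ → ℝ)
    (hw : ContinuousOn w {t : ℝ | 0 ≤ t ∧ (t : EReal) < T})
    (hderiv : ∀ t : ℝ, 0 < t → (t : EReal) < T →
      ∃ d : ℝ, HasDerivAt w d t ∧ -α (w t) ≤ d)
    (h0 : 0 ≤ w 0) :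
    ∀ t : ℝ, 0 ≤ t → (t : EReal) < T → 0 ≤ w t :=
  stmt_7_general α (fun _ hy ↦ hα0 ▸ (hαm hy).le) T w hw hderiv h0
end

section
/- Let α, φ : ℝ → ℝ be extended class-𝒦 functions that are locally Lipschitz, let T ∈ (0, ∞], and let c : ℝ → ℝ be continuously differentiable on [0, T) such that the function h(t) := c′(t) + φ(c(t)) is continuous on [0, T), differentiable on (0, T), and satisfies h′(t) ≥ −α(h(t)) for all t ∈ (0, T). If h(0) ≥ 0 and c(0) ≥ 0, then h(t) ≥ 0 and c(t) ≥ 0 for all t ∈ [0, T). -/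
/-!
A function whose derivative is nonnegative wherever the function lies below a level `m` cannot cross
`m` downwards: after the last time it is at least `m` it would have to be monotone. If `g' ≥ -α ∘ g`
and `α ≤ 0` on the negative reals, this applies to `g` with `m = 0`. It is applied first to
`h = c' + φ ∘ c`, and then to `c`, because `h ≥ 0` says that `c' ≥ -φ ∘ c`.
-/

open Set

theorem exists_last_le_of_continuousOn_Icc {X Y : Type*}
    [ConditionallyCompleteLinearOrder X] [TopologicalSpace X] [OrderTopology X]
    [LinearOrder Y] [TopologicalSpace Y] [ClosedIciTopology Y]
    {g : X → Y} {a b : X} {m : Y} (hab : a ≤ b) (hg : ContinuousOn g (Icc a b))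
    (ha : m ≤ g a) (hb : g b < m) :
    ∃ l ∈ Ico a b, m ≤ g l ∧ ∀ t ∈ Ioc l b, g t < m := by
  have compact_superlevel : IsCompact (Icc a b ∩ g ⁻¹' Ici m) :=
    isCompact_Icc.of_isClosed_subset (hg.preimage_isClosed_of_isClosed isClosed_Icc isClosed_Ici)
      inter_subset_left
  obtain ⟨l, ⟨hl, hgl⟩, hmax⟩ :=
    compact_superlevel.exists_isGreatest ⟨a, left_mem_Icc.2 hab, ha⟩
  have hlb : l ≠ b := fun h => hb.not_ge (h ▸ hgl)
  refine ⟨l, ⟨hl.1, hl.2.lt_of_ne hlb⟩, hgl, fun t ht => not_le.1 fun hgt => ?_⟩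
  exact ht.1.not_ge (hmax ⟨⟨hl.1.trans ht.1.le, ht.2⟩, hgt⟩)

theorem le_right_of_deriv_nonneg_of_lt {g : ℝ → ℝ} {a b m : ℝ} (hab : a ≤ b)
    (hg : ContinuousOn g (Icc a b))
    (hderiv : ∀ t ∈ Ioo a b, g t < m → ∃ d, HasDerivAt g d t ∧ 0 ≤ d)
    (ha : m ≤ g a) : m ≤ g b := by
  by_contra! hb
  obtain ⟨l, hl, hgl, hlt⟩ := exists_last_le_of_continuousOn_Icc hab hg ha hb
  have hderiv_after : ∀ t ∈ Ioo l b, ∃ d, HasDerivAt g d t ∧ 0 ≤ d := fun t ht =>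
    hderiv t ⟨hl.1.trans_lt ht.1, ht.2⟩ (hlt t ⟨ht.1, ht.2.le⟩)
  have hmono : MonotoneOn g (Icc l b) := by
    refine monotoneOn_of_deriv_nonneg (convex_Icc l b) (hg.mono (Icc_subset_Icc_left hl.1)) ?_ ?_
    all_goals
      rw [interior_Icc]
      intro t ht
      obtain ⟨d, hd, hd_nonneg⟩ := hderiv_after t ht
    · exact hd.differentiableAt.differentiableWithinAt
    · exact hd.deriv.symm ▸ hd_nonneg
  have hle : g l ≤ g b := hmono (left_mem_Icc.2 hl.2.le) (right_mem_Icc.2 hl.2.le) hl.2.le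
  exact hb.not_ge (hgl.trans hle)

theorem nonneg_of_neg_comp_le_deriv {α g : ℝ → ℝ} {s : Set ℝ} {a : ℝ}
    (hα : ∀ x < 0, α x ≤ 0) (hs : s.OrdConnected) (ha : IsLeast s a) (hg : ContinuousOn g s)
    (hderiv : ∀ t ∈ interior s, ∃ d, HasDerivAt g d t ∧ -α (g t) ≤ d)
    (hga : 0 ≤ g a) : ∀ t ∈ s, 0 ≤ g t := by
  intro t ht
  have hsub : Icc a t ⊆ s := hs.out ha.1 ht
  refine le_right_of_deriv_nonneg_of_lt (ha.2 ht) (hg.mono hsub) (fun u hu hneg => ?_) hga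
  have hu_interior : u ∈ interior s :=
    interior_maximal (Ioo_subset_Icc_self.trans hsub) isOpen_Ioo hu
  obtain ⟨d, hd, hle⟩ := hderiv u hu_interior
  exact ⟨d, hd, (neg_nonneg.2 (hα _ hneg)).trans hle⟩

theorem stmt_8_general {α φ c c' : ℝ → ℝ} {s : Set ℝ} {a : ℝ}
    (hα : ∀ x < 0, α x ≤ 0) (hφ : ∀ x < 0, φ x ≤ 0) (hs : s.OrdConnected) (ha : IsLeast s a)
    (hc : ∀ t ∈ s, HasDerivWithinAt c (c' t) s t)
    (hhcont : ContinuousOn (fun t => c' t + φ (c t)) s)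
    (hhderiv : ∀ t ∈ interior s,
      ∃ d, HasDerivAt (fun u => c' u + φ (c u)) d t ∧ -α (c' t + φ (c t)) ≤ d)
    (hha : 0 ≤ c' a + φ (c a)) (hca : 0 ≤ c a) :
    ∀ t ∈ s, 0 ≤ c' t + φ (c t) ∧ 0 ≤ c t := by
  have h_nonneg : ∀ t ∈ s, 0 ≤ c' t + φ (c t) :=
    nonneg_of_neg_comp_le_deriv hα hs ha hhcont hhderiv hha
  have hc_cont : ContinuousOn c s := fun t ht => (hc t ht).continuousWithinAt
  have hc_deriv : ∀ t ∈ interior s, ∃ d, HasDerivAt c d t ∧ -φ (c t) ≤ d := fun t ht =>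
    have hts : t ∈ s := interior_subset ht
    ⟨c' t, (hc t hts).hasDerivAt (mem_interior_iff_mem_nhds.1 ht),
      neg_le_iff_add_nonneg.2 (h_nonneg t hts)⟩
  exact fun t ht =>
    ⟨h_nonneg t ht, nonneg_of_neg_comp_le_deriv hφ hs ha hc_cont hc_deriv hca t ht⟩

theorem ordConnected_setOf_le_and_coe_lt (a : ℝ) (T : EReal) :
    {t : ℝ | a ≤ t ∧ (t : EReal) < T}.OrdConnected :=
  ordConnected_Ici.inter (ordConnected_Iio.preimage_mono EReal.coe_strictMono.monotone)

theorem lt_of_mem_interior_setOf_le_and {p : ℝ → Prop} {a t : ℝ}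
    (ht : t ∈ interior {u : ℝ | a ≤ u ∧ p u}) : a < t :=
  interior_Ici.subset (interior_mono (fun _ hu => hu.1) ht)

/-- scalar form of the high-order (relative-degree two) CBF
argument: both `h = c' + φ ∘ c` and `c` stay nonnegative on `[0,T)`. -/
theorem stmt_8 (α φ : ℝ → ℝ)
    (hαc : Continuous α) (hαm : StrictMono α) (hα0 : α 0 = 0)
    (hαl : LocallyLipschitz α)
    (hφc : Continuous φ) (hφm : StrictMono φ) (hφ0 : φ 0 = 0)
    (hφl : LocallyLipschitz φ)
    (T : EReal) (hT : 0 < T)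
    (c c' : ℝ → ℝ)
    (hc : ∀ t : ℝ, 0 ≤ t → (t : EReal) < T →
      HasDerivWithinAt c (c' t) {s : ℝ | 0 ≤ s ∧ (s : EReal) < T} t)
    (hc' : ContinuousOn c' {t : ℝ | 0 ≤ t ∧ (t : EReal) < T})
    (hhcont : ContinuousOn (fun t => c' t + φ (c t)) {t : ℝ | 0 ≤ t ∧ (t : EReal) < T})
    (hhderiv : ∀ t : ℝ, 0 < t → (t : EReal) < T →
      ∃ d : ℝ, HasDerivAt (fun s => c' s + φ (c s)) d t ∧ -α (c' t + φ (c t)) ≤ d)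
    (hh0 : 0 ≤ c' 0 + φ (c 0)) (hc0 : 0 ≤ c 0) :
    ∀ t : ℝ, 0 ≤ t → (t : EReal) < T → 0 ≤ c' t + φ (c t) ∧ 0 ≤ c t := by
  exact fun t ht htT => stmt_8_general
    (fun _ hx => hα0 ▸ (hαm hx).le) (fun _ hx => hφ0 ▸ (hφm hx).le)
    (ordConnected_setOf_le_and_coe_lt 0 T) ⟨⟨le_rfl, hT⟩, fun _ hu => hu.1⟩
    (fun u hu => hc u hu.1 hu.2) hhcont
    (fun u hu => hhderiv u (lt_of_mem_interior_setOf_le_and hu) (interior_subset hu).2)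
    hh0 hc0 t ⟨ht, htT⟩
end

section
/- Let n ≥ 1, let M, N, C, K_p, K_d be real n×n matrices with M symmetric positive definite, K_p symmetric, and suppose vᵀ((1/2)N − C)v = 0 for the given vector v ∈ ℝⁿ. Let q, τ_g, w ∈ ℝⁿ with w ≠ 0, let z ∈ ℝ and ρ > 0. Define k = τ_g − K_p q − K_d v, ū = k − (z/(wᵀ M⁻¹ w)) w, and u* = ū + (ρ² z (wᵀ v)/(wᵀ M⁻¹ w)) v. Then (1/2) vᵀ N v + vᵀ(−C v − τ_g + u*) + qᵀ K_p v = −vᵀ K_d v − (z (wᵀ v)/(wᵀ M⁻¹ w)) (1 − ρ² ‖v‖²). Consequently, if z < 0, wᵀ v > 0, and ‖v‖ ≥ 1/ρ, then (1/2) vᵀ N v + vᵀ(−C v − τ_g + u*) + qᵀ K_p v ≤ −vᵀ K_d v. -/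
open Matrix

/-!
Skew-symmetry of `½ N - C` removes the Coriolis terms and symmetry of `K_p` turns the potential
term into `vᵀ K_p q`, so the energy rate is the power `vᵀ (u - (τ_g - K_p q))` of the input beyond
gravity compensation and proportional feedback. Against `v`, the barrier term of the input gives
`-s` with `s = z (wᵀ v) / (wᵀ M⁻¹ w)`, while the augmenting term gives `ρ² ‖v‖² s`. Their sum
`-s (1 - ρ² ‖v‖²)` is nonpositive once `s ≤ 0` and `ρ ‖v‖ ≥ 1`.
-/

section LinearAlgebra

variable {ι 𝕜 : Type*} [Fintype ι] [DecidableEq ι] [Field 𝕜] [PartialOrder 𝕜]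
  {M : Matrix ι ι 𝕜}

theorem isUnit_of_dotProduct_mulVec_pos (hM : ∀ x, x ≠ 0 → 0 < x ⬝ᵥ M *ᵥ x) : IsUnit M := by
  refine mulVec_injective_iff_isUnit.mp ((injective_iff_map_eq_zero M.mulVecLin).mpr ?_)
  intro x (hx : M *ᵥ x = 0)
  by_contra hx0
  simpa [hx] using hM x hx0

theorem dotProduct_inv_mulVec_pos_s12 (hM : ∀ x, x ≠ 0 → 0 < x ⬝ᵥ M *ᵥ x) {w : ι → 𝕜} (hw : w ≠ 0) :
    0 < w ⬝ᵥ M⁻¹ *ᵥ w := by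
  have hdet : IsUnit M.det := (isUnit_iff_isUnit_det M).mp (isUnit_of_dotProduct_mulVec_pos hM)
  have hM_inv : M *ᵥ M⁻¹ *ᵥ w = w := by rw [mulVec_mulVec, mul_nonsing_inv M hdet, one_mulVec]
  have hinv_ne : M⁻¹ *ᵥ w ≠ 0 := fun h => hw (by rw [← hM_inv, h, mulVec_zero])
  simpa only [hM_inv, dotProduct_comm (M⁻¹ *ᵥ w)] using hM _ hinv_ne

end LinearAlgebra

theorem one_div_le_sqrt_iff {ρ : ℝ} (hρ : 0 < ρ) (x : ℝ) : 1 / ρ ≤ √x ↔ 1 ≤ ρ ^ 2 * x := by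
  rw [Real.le_sqrt' (one_div_pos.mpr hρ), _root_.one_div_pow, div_le_iff₀' (pow_pos hρ 2)]

section Control

variable {ι 𝕜 : Type*} [Fintype ι] [Field 𝕜]

/-- The derivative of the energy `½ vᵀ M v + ½ qᵀ K_p q` along the mechanical system
`M v̇ + C v + τ_g = u`, `q̇ = v`, with `K_p` symmetric. The matrix `N` stands for `Ṁ`, and
`M v̇` has been replaced by `-C v - τ_g + u`. -/
def energyRate (N C K_p : Matrix ι ι 𝕜) (τ_g q v u : ι → 𝕜) : 𝕜 :=
  (1 / 2 : 𝕜) * (v ⬝ᵥ N *ᵥ v) + v ⬝ᵥ (-(C *ᵥ v) - τ_g + u) + q ⬝ᵥ K_p *ᵥ v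

/-- Proportional-derivative feedback with gravity compensation, the nominal controller `k`. -/
def pdControl (K_p K_d : Matrix ι ι 𝕜) (τ_g q v : ι → 𝕜) : ι → 𝕜 :=
  τ_g - K_p *ᵥ q - K_d *ᵥ v

/-- The augmented safe controller `u*` built on a nominal input `k`: the safe controller
`k - (z / ‖w‖²) w` plus the term `ξ = (ρ² z (wᵀ v) / ‖w‖²) v`, where `‖w‖² = wᵀ M⁻¹ w` and `w` is
the gradient of the constraint function. -/
noncomputable def augmentedSafeControl [DecidableEq ι] (M : Matrix ι ι 𝕜) (k v w : ι → 𝕜)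
    (z ρ : 𝕜) : ι → 𝕜 :=
  k - (z / (w ⬝ᵥ M⁻¹ *ᵥ w)) • w + (ρ ^ 2 * z * (w ⬝ᵥ v) / (w ⬝ᵥ M⁻¹ *ᵥ w)) • v

theorem energyRate_eq_dotProduct {N C K_p : Matrix ι ι 𝕜} (hK_p : K_p.IsSymm) {v : ι → 𝕜}
    (hskew : v ⬝ᵥ ((1 / 2 : 𝕜) • N - C) *ᵥ v = 0) (τ_g q u : ι → 𝕜) :
    energyRate N C K_p τ_g q v u = v ⬝ᵥ (u - (τ_g - K_p *ᵥ q)) := by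
  have hcoriolis : (1 / 2 : 𝕜) * (v ⬝ᵥ N *ᵥ v) - v ⬝ᵥ C *ᵥ v = 0 := by
    rwa [sub_mulVec, smul_mulVec, dotProduct_sub, dotProduct_smul, smul_eq_mul] at hskew
  have hpotential : q ⬝ᵥ K_p *ᵥ v = v ⬝ᵥ K_p *ᵥ q := by
    rw [← dotProduct_transpose_mulVec, hK_p.eq]
  simp only [energyRate, dotProduct_add, dotProduct_sub, dotProduct_neg]
  linear_combination hcoriolis + hpotential

theorem dotProduct_augmentedSafeControl [DecidableEq ι] (M : Matrix ι ι 𝕜) (k v w : ι → 𝕜)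
    (z ρ : 𝕜) :
    v ⬝ᵥ augmentedSafeControl M k v w z ρ =
      v ⬝ᵥ k - z * (w ⬝ᵥ v) / (w ⬝ᵥ M⁻¹ *ᵥ w) * (1 - ρ ^ 2 * (v ⬝ᵥ v)) := by
  simp only [augmentedSafeControl, dotProduct_add, dotProduct_sub, dotProduct_smul, smul_eq_mul,
    dotProduct_comm v w]
  ring

theorem energyRate_augmentedSafeControl [DecidableEq ι] (M : Matrix ι ι 𝕜) {N C K_p : Matrix ι ι 𝕜}
    (K_d : Matrix ι ι 𝕜) (hK_p : K_p.IsSymm) {v : ι → 𝕜}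
    (hskew : v ⬝ᵥ ((1 / 2 : 𝕜) • N - C) *ᵥ v = 0) (τ_g q w : ι → 𝕜) (z ρ : 𝕜) :
    energyRate N C K_p τ_g q v (augmentedSafeControl M (pdControl K_p K_d τ_g q v) v w z ρ) =
      -(v ⬝ᵥ K_d *ᵥ v) - z * (w ⬝ᵥ v) / (w ⬝ᵥ M⁻¹ *ᵥ w) * (1 - ρ ^ 2 * (v ⬝ᵥ v)) := by
  rw [energyRate_eq_dotProduct hK_p hskew, dotProduct_sub, dotProduct_augmentedSafeControl,
    pdControl, dotProduct_sub v (τ_g - K_p *ᵥ q)]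
  ring

end Control

theorem stmt_12_general {ι : Type*} [Fintype ι] [DecidableEq ι] {M N C K_p : Matrix ι ι ℝ}
    (K_d : Matrix ι ι ℝ) (hM : ∀ x, x ≠ 0 → 0 < x ⬝ᵥ M *ᵥ x) (hK_p : K_p.IsSymm) {v w : ι → ℝ}
    (τ_g q : ι → ℝ) (hskew : v ⬝ᵥ ((1 / 2 : ℝ) • N - C) *ᵥ v = 0) (hw : w ≠ 0) (z : ℝ) {ρ : ℝ}
    (hρ : 0 < ρ) :
    let rate :=
      energyRate N C K_p τ_g q v (augmentedSafeControl M (pdControl K_p K_d τ_g q v) v w z ρ)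
    rate = -(v ⬝ᵥ K_d *ᵥ v) - z * (w ⬝ᵥ v) / (w ⬝ᵥ M⁻¹ *ᵥ w) * (1 - ρ ^ 2 * (v ⬝ᵥ v)) ∧
      (z * (w ⬝ᵥ v) ≤ 0 → 1 / ρ ≤ √(v ⬝ᵥ v) → rate ≤ -(v ⬝ᵥ K_d *ᵥ v)) := by
  intro rate
  have hrate : rate = _ := energyRate_augmentedSafeControl M K_d hK_p hskew τ_g q w z ρ
  refine ⟨hrate, fun hz hv => ?_⟩
  have hbarrier : z * (w ⬝ᵥ v) / (w ⬝ᵥ M⁻¹ *ᵥ w) ≤ 0 :=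
    div_nonpos_of_nonpos_of_nonneg hz (dotProduct_inv_mulVec_pos_s12 hM hw).le
  have hspeed : 1 - ρ ^ 2 * (v ⬝ᵥ v) ≤ 0 := sub_nonpos.mpr ((one_div_le_sqrt_iff hρ _).mp hv)
  rw [hrate]
  exact sub_le_self _ (mul_nonneg_of_nonpos_of_nonpos hbarrier hspeed)

/-- Lyapunov-derivative computation for the augmented safe
controller (16), and the resulting inequality when `‖v‖ ≥ 1/ρ`. -/
theorem stmt_12 (n : ℕ) (hn : 1 ≤ n)
    (M N C K_p K_d : Matrix (Fin n) (Fin n) ℝ)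
    (hMsymm : Mᵀ = M)
    (hMpos : ∀ u : Fin n → ℝ, u ≠ 0 → 0 < u ⬝ᵥ M *ᵥ u)
    (hKp : K_pᵀ = K_p)
    (v q τ_g w : Fin n → ℝ)
    (hskew : v ⬝ᵥ ((1 / 2 : ℝ) • N - C) *ᵥ v = 0)
    (hw : w ≠ 0) (z ρ : ℝ) (hρ : 0 < ρ) :
    let k := τ_g - K_p *ᵥ q - K_d *ᵥ v
    let ubar := k - (z / (w ⬝ᵥ M⁻¹ *ᵥ w)) • w
    let ustar := ubar + (ρ ^ 2 * z * (w ⬝ᵥ v) / (w ⬝ᵥ M⁻¹ *ᵥ w)) • v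
    ((1 / 2 : ℝ) * (v ⬝ᵥ N *ᵥ v) + v ⬝ᵥ (-(C *ᵥ v) - τ_g + ustar) + q ⬝ᵥ K_p *ᵥ v
      = -(v ⬝ᵥ K_d *ᵥ v) - (z * (w ⬝ᵥ v) / (w ⬝ᵥ M⁻¹ *ᵥ w)) * (1 - ρ ^ 2 * (v ⬝ᵥ v))) ∧
    (z < 0 → 0 < w ⬝ᵥ v → 1 / ρ ≤ Real.sqrt (v ⬝ᵥ v) →
      (1 / 2 : ℝ) * (v ⬝ᵥ N *ᵥ v) + v ⬝ᵥ (-(C *ᵥ v) - τ_g + ustar) + q ⬝ᵥ K_p *ᵥ v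
        ≤ -(v ⬝ᵥ K_d *ᵥ v)) := by
  obtain ⟨hrate, hdecay⟩ := stmt_12_general K_d hMpos hKp τ_g q hskew hw z hρ
  exact ⟨hrate, fun hz hwv => hdecay (mul_nonpos_of_nonpos_of_nonneg hz.le hwv.le)⟩
end

section
/- Let n ≥ 1, let M, C, K_p, K_d, P_v be real n×n matrices with M invertible, K_p symmetric, and P_v symmetric positive semidefinite. Let q, v, τ_g ∈ ℝⁿ with P_v v ≠ 0, and let z ∈ ℝ with z ≤ 0. Define u = C v + τ_g + M(−K_p q − K_d v) + (z/‖P_v v‖²) M P_v v. Then qᵀ K_p v + vᵀ (M⁻¹(−C v − τ_g + u)) = −vᵀ K_d v + z (vᵀ P_v v)/‖P_v v‖² ≤ vᵀ(−K_d v). -/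
open Matrix

/-! Computed torque cancels the dynamics, so the acceleration is exactly
`-K_p q - K_d v + (z / ‖w‖²) w` with `w = P_v v`. By symmetry of `K_p` the potential part of `V̇`
cancels the first term, and the barrier correction contributes `z (vᵀ w) / ‖w‖² ≤ 0`. -/

section MechanicalSystem

variable {ι R : Type*} [Fintype ι] [CommRing R]

/-- The control torque which imposes the acceleration `a` on the mechanical system with inertia
`M`, Coriolis matrix `C` and gravity torque `τ` at velocity `v`. -/
def computedTorque (M C : Matrix ι ι R) (v τ a : ι → R) : ι → R :=
  C *ᵥ v + τ + M *ᵥ a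

theorem computedTorque_add_smul (M C : Matrix ι ι R) (v τ a w : ι → R) (c : R) :
    computedTorque M C v τ (a + c • w) = computedTorque M C v τ a + c • M *ᵥ w := by
  simp only [computedTorque, mulVec_add, mulVec_smul, add_assoc]

/-- The acceleration of the mechanical system with inertia `M`, Coriolis matrix `C` and gravity
torque `τ`, moving with velocity `v` under the control torque `u`. The inverse is Mathlib's total
one, so this is meaningful only for invertible `M`. -/
noncomputable def forwardDynamics [DecidableEq ι] (M C : Matrix ι ι R) (v τ u : ι → R) : ι → R :=
  M⁻¹ *ᵥ (-(C *ᵥ v) - τ + u)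

theorem forwardDynamics_computedTorque [DecidableEq ι] {M : Matrix ι ι R} (hM : IsUnit M)
    (C : Matrix ι ι R) (v τ a : ι → R) :
    forwardDynamics M C v τ (computedTorque M C v τ a) = a := by
  have := hM.invertible
  refine inv_mulVec_eq_vec ?_
  rw [computedTorque]
  abel

theorem dotProduct_mulVec_add_dotProduct_neg_mulVec_add {K : Matrix ι ι R} (hK : K.IsSymm)
    (q v μ : ι → R) : q ⬝ᵥ K *ᵥ v + v ⬝ᵥ (-(K *ᵥ q) + μ) = v ⬝ᵥ μ := by
  have potential_symm : q ⬝ᵥ K *ᵥ v = v ⬝ᵥ K *ᵥ q := by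
    simpa only [hK.eq] using dotProduct_transpose_mulVec K q v
  rw [potential_symm, dotProduct_add, dotProduct_neg, add_neg_cancel_left]

end MechanicalSystem

theorem dotProduct_self_pos {ι R : Type*} [Fintype ι] [Ring R] [LinearOrder R]
    [IsStrictOrderedRing R] {w : ι → R} (hw : w ≠ 0) : 0 < w ⬝ᵥ w :=
  (Finset.sum_nonneg fun i _ => mul_self_nonneg (w i)).lt_of_ne'
    (dotProduct_self_eq_zero.not.mpr hw)

theorem stmt_14_general {ι R : Type*} [Fintype ι] [DecidableEq ι] [Field R] [LinearOrder R]
    [IsStrictOrderedRing R] {M K_p : Matrix ι ι R} (C K_d : Matrix ι ι R) (hM : IsUnit M)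
    (hKp : K_p.IsSymm) (q v τ_g : ι → R) {w : ι → R} (hw : w ≠ 0) (hvw : 0 ≤ v ⬝ᵥ w)
    {z : R} (hz : z ≤ 0) :
    let s := w ⬝ᵥ w
    let u := C *ᵥ v + τ_g + M *ᵥ (-(K_p *ᵥ q) - K_d *ᵥ v) + (z / s) • (M *ᵥ w)
    (q ⬝ᵥ K_p *ᵥ v + v ⬝ᵥ (M⁻¹ *ᵥ (-(C *ᵥ v) - τ_g + u))
      = -(v ⬝ᵥ K_d *ᵥ v) + z * (v ⬝ᵥ w) / s) ∧
    (q ⬝ᵥ K_p *ᵥ v + v ⬝ᵥ (M⁻¹ *ᵥ (-(C *ᵥ v) - τ_g + u)) ≤ v ⬝ᵥ (-(K_d *ᵥ v))) := by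
  intro s u
  have acceleration : M⁻¹ *ᵥ (-(C *ᵥ v) - τ_g + u)
      = -(K_p *ᵥ q) + (-(K_d *ᵥ v) + (z / s) • w) := by
    have control : u = computedTorque M C v τ_g (-(K_p *ᵥ q) - K_d *ᵥ v + (z / s) • w) :=
      (computedTorque_add_smul ..).symm
    calc M⁻¹ *ᵥ (-(C *ᵥ v) - τ_g + u) = -(K_p *ᵥ q) - K_d *ᵥ v + (z / s) • w := by
          rw [control, ← forwardDynamics, forwardDynamics_computedTorque hM]
      _ = -(K_p *ᵥ q) + (-(K_d *ᵥ v) + (z / s) • w) := by rw [sub_eq_add_neg, add_assoc]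
  have storage_rate : q ⬝ᵥ K_p *ᵥ v + v ⬝ᵥ (M⁻¹ *ᵥ (-(C *ᵥ v) - τ_g + u))
      = -(v ⬝ᵥ K_d *ᵥ v) + z * (v ⬝ᵥ w) / s := by
    rw [acceleration, dotProduct_mulVec_add_dotProduct_neg_mulVec_add hKp, dotProduct_add,
      dotProduct_neg, dotProduct_smul, smul_eq_mul, div_mul_eq_mul_div]
  have correction_nonpos : z * (v ⬝ᵥ w) / s ≤ 0 :=
    div_nonpos_of_nonpos_of_nonneg (mul_nonpos_of_nonpos_of_nonneg hz hvw)
      (dotProduct_self_pos hw).le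
  refine ⟨storage_rate, ?_⟩
  rw [storage_rate, dotProduct_neg]
  exact add_le_of_nonpos_right correction_nonpos

/-- pointwise passivity computation of Proposition 1 for the
active branch of the safe controller with velocity-type barrier. -/
theorem stmt_14 (n : ℕ) (hn : 1 ≤ n)
    (M C K_p K_d P_v : Matrix (Fin n) (Fin n) ℝ)
    (hM : IsUnit M) (hKp : K_pᵀ = K_p)
    (hPvsymm : P_vᵀ = P_v)
    (hPvpsd : ∀ u : Fin n → ℝ, 0 ≤ u ⬝ᵥ P_v *ᵥ u)
    (q v τ_g : Fin n → ℝ) (hPvv : P_v *ᵥ v ≠ 0)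
    (z : ℝ) (hz : z ≤ 0) :
    let s := (P_v *ᵥ v) ⬝ᵥ (P_v *ᵥ v)
    let u := C *ᵥ v + τ_g + M *ᵥ (-(K_p *ᵥ q) - K_d *ᵥ v) + (z / s) • (M *ᵥ (P_v *ᵥ v))
    (q ⬝ᵥ K_p *ᵥ v + v ⬝ᵥ (M⁻¹ *ᵥ (-(C *ᵥ v) - τ_g + u))
      = -(v ⬝ᵥ K_d *ᵥ v) + z * (v ⬝ᵥ P_v *ᵥ v) / s) ∧
    (q ⬝ᵥ K_p *ᵥ v + v ⬝ᵥ (M⁻¹ *ᵥ (-(C *ᵥ v) - τ_g + u)) ≤ v ⬝ᵥ (-(K_d *ᵥ v))) :=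
  stmt_14_general C K_d hM hKp q v τ_g hPvv (hPvpsd v) hz
end
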